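/- For every k ≥ 5, every connected graph G on at least k vertices with maximum density m(G) < (k+1)/2, all of whose vertices and edges lie in a single K_k-component, admits a proper (complete) edge-colouring in which no copy of K_k is rainbow. -/

import Mathlib

namespace RainbowClique

open Finset

set_option linter.unusedSectionVars false

section Colouring

variable {V : Type*} [DecidableEq V]

/-- Colours are edges; an edge `e` with `c e = e` is thought of as having its own colour.
Only edges inside `U` have been recoloured, and every colour outside `B` is used at most twice. -/
structure IsColouring (c : Sym2 V → Sym2 V) (U : Finset V) (B : Finset (Sym2 V)) : Prop where
  proper : ∀ e f, e ≠ f → ∀ x ∈ e, x ∈ f → c e ≠ c f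
  outside : ∀ e ∉ U.sym2, c e = e
  inside : ∀ e ∈ U.sym2, c e ∈ U.sym2
  small : ∀ e₁ e₂ e₃, c e₁ = c e₂ → c e₁ = c e₃ → c e₁ ∉ B → e₁ = e₂ ∨ e₁ = e₃ ∨ e₂ = e₃

/-- The colour `γ` does not occur at the vertex `a`. -/
def Free (c : Sym2 V → Sym2 V) (a : V) (γ : Sym2 V) : Prop := ∀ e, a ∈ e → c e ≠ γ

/-- The edge `e` is the only one with its colour. -/
def IsUnique (c : Sym2 V → Sym2 V) (e : Sym2 V) : Prop := ∀ f, c f = c e → f = e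

/-- Two distinct edges inside `s` have the same colour. -/
def HasRepeat (c : Sym2 V → Sym2 V) (s : Finset V) : Prop :=
  ∃ a ∈ s, ∃ b ∈ s, ∃ a' ∈ s, ∃ b' ∈ s, a ≠ b ∧ a' ≠ b' ∧ s(a, b) ≠ s(a', b') ∧
    c s(a, b) = c s(a', b')

variable {c : Sym2 V → Sym2 V} {U U' : Finset V} {B : Finset (Sym2 V)}

theorem isColouring_id : IsColouring (id : Sym2 V → Sym2 V) U B where
  proper _ _ h _ _ _ := h
  outside _ _ := rfl
  inside _ h := h
  small _ _ _ h _ _ := Or.inl h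

theorem IsColouring.mono (h : IsColouring c U B) (hU : U ⊆ U') : IsColouring c U' B where
  proper := h.proper
  outside e he := h.outside e fun h' => he (sym2_mono hU h')
  inside e he := by
    by_cases h' : e ∈ U.sym2
    · exact sym2_mono hU (h.inside e h')
    · rwa [h.outside e h']
  small := h.small

theorem IsColouring.isUnique (h : IsColouring c U B) {e : Sym2 V} (he : e ∉ U.sym2) :
    IsUnique c e := by
  intro f hf
  rw [h.outside e he] at hf
  by_cases h' : f ∈ U.sym2
  · exact absurd (hf ▸ h.inside f h') he
  · rwa [h.outside f h'] at hf

theorem HasRepeat.congr {c' : Sym2 V → Sym2 V} {s : Finset V} (h : HasRepeat c s) (hs : s ⊆ U)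
    (hc : ∀ e ∈ U.sym2, c' e = c e) : HasRepeat c' s := by
  obtain ⟨a, ha, b, hb, a', ha', b', hb', h₁, h₂, h₃, h₄⟩ := h
  refine ⟨a, ha, b, hb, a', ha', b', hb', h₁, h₂, h₃, ?_⟩
  rw [hc _ (mk_mem_sym2_iff.2 ⟨hs ha, hs hb⟩), hc _ (mk_mem_sym2_iff.2 ⟨hs ha', hs hb'⟩), h₄]

/-- Two disjoint edges with unique colours can be given a common colour. -/
theorem IsColouring.merge (h : IsColouring c U B) {e f : Sym2 V} (he : IsUnique c e)
    (hf : IsUnique c f) (heU : e ∈ U.sym2) (hfU : f ∈ U.sym2) (hd : ∀ x ∈ e, x ∉ f) :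
    ∃ c', IsColouring c' U B ∧ c' f = c' e ∧ (∀ g, g ≠ f → c' g = c g) ∧
      ∀ g, g ≠ e → g ≠ f → IsUnique c g → IsUnique c' g := by
  have hne : e ≠ f := by
    rintro rfl
    induction e with | _ a b => exact hd a (by simp) (by simp)
  refine ⟨Function.update c f (c e), ⟨?_, ?_, ?_, ?_⟩, ?_, ?_, ?_⟩
  · intro e₁ e₂ h₁₂ x hx₁ hx₂ heq
    by_cases h₁ : e₁ = f
    · subst h₁
      rw [Function.update_self, Function.update_of_ne h₁₂.symm] at heq
      have := he _ heq.symm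
      subst this
      exact hd x hx₂ hx₁
    · by_cases h₂ : e₂ = f
      · subst h₂
        rw [Function.update_self, Function.update_of_ne h₁] at heq
        have := he _ heq
        subst this
        exact hd x hx₁ hx₂
      · rw [Function.update_of_ne h₁, Function.update_of_ne h₂] at heq
        exact h.proper _ _ h₁₂ x hx₁ hx₂ heq
  · intro g hg
    rw [Function.update_of_ne (by rintro rfl; exact hg hfU), h.outside g hg]
  · intro g hg
    by_cases hgf : g = f
    · subst hgf
      rw [Function.update_self]
      exact h.inside e heU
    · rw [Function.update_of_ne hgf]
      exact h.inside g hg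
  · intro e₁ e₂ e₃ h₁₂ h₁₃ hB
    have key : ∀ g, Function.update c f (c e) g = c e → g = e ∨ g = f := by
      intro g hg
      by_cases hgf : g = f
      · exact Or.inr hgf
      · rw [Function.update_of_ne hgf] at hg
        exact Or.inl (he _ hg)
    by_cases h' : Function.update c f (c e) e₁ = c e
    · have k₁ := key _ h'
      have k₂ := key _ (h₁₂ ▸ h')
      have k₃ := key _ (h₁₃ ▸ h')
      grind
    · have aux : ∀ g, Function.update c f (c e) e₁ = Function.update c f (c e) g →
          Function.update c f (c e) g = c g := by
        intro g hg
        apply Function.update_of_ne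
        rintro rfl
        rw [Function.update_self] at hg
        exact h' hg
      have k₁ := aux e₁ rfl
      have k₂ := aux e₂ h₁₂
      have k₃ := aux e₃ h₁₃
      exact h.small e₁ e₂ e₃ (by rw [← k₁, ← k₂, h₁₂]) (by rw [← k₁, ← k₃, h₁₃]) (by rwa [← k₁])
  · rw [Function.update_self, Function.update_of_ne hne]
  · intro g hg
    exact Function.update_of_ne hg _ _
  · intro g hge hgf hg g' hg'
    rw [Function.update_of_ne hgf] at hg'
    by_cases h' : g' = f
    · subst h'
      rw [Function.update_self] at hg'
      exact absurd (hg _ hg').symm hge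
    · rw [Function.update_of_ne h'] at hg'
      exact hg _ hg'

/-- Disjoint pairs of edges with unique colours can each be given a common colour. -/
theorem IsColouring.merge_list (h : IsColouring c U B) (L : List (Sym2 V × Sym2 V))
    (hL : ∀ q ∈ L, (IsUnique c q.1 ∧ IsUnique c q.2) ∧ (q.1 ∈ U.sym2 ∧ q.2 ∈ U.sym2) ∧
      ∀ x ∈ q.1, x ∉ q.2)
    (hp : L.Pairwise fun q r => q.1 ≠ r.1 ∧ q.1 ≠ r.2 ∧ q.2 ≠ r.1 ∧ q.2 ≠ r.2) :
    ∃ c', IsColouring c' U B ∧ (∀ q ∈ L, c' q.2 = c' q.1) ∧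
      ∀ g, (∀ q ∈ L, g ≠ q.2) → c' g = c g := by
  induction L generalizing c with
  | nil => exact ⟨c, h, by simp, fun _ _ => rfl⟩
  | cons q L ih =>
    rw [List.pairwise_cons] at hp
    obtain ⟨⟨hu₁, hu₂⟩, ⟨hm₁, hm₂⟩, hd⟩ := hL q List.mem_cons_self
    obtain ⟨c₁, h₁, heq, hold, huniq⟩ := h.merge hu₁ hu₂ hm₁ hm₂ hd
    obtain ⟨c', h', heq', hold'⟩ := ih h₁ (fun r hr => by
      obtain ⟨⟨h1, h2⟩, h3⟩ := hL r (List.mem_cons_of_mem _ hr)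
      obtain ⟨n1, n2, n3, n4⟩ := hp.1 r hr
      exact ⟨⟨huniq _ n1.symm n3.symm h1, huniq _ n2.symm n4.symm h2⟩, h3⟩) hp.2
    refine ⟨c', h', ?_, fun g hg => ?_⟩
    · rw [List.forall_mem_cons]
      refine ⟨?_, heq'⟩
      rw [hold' q.2 fun r hr => (hp.1 r hr).2.2.2, hold' q.1 fun r hr => (hp.1 r hr).2.1, heq]
    · rw [List.forall_mem_cons] at hg
      rw [hold' g hg.2, hold g hg.1]

/-- Colour the edges from a new vertex `x` to `A` with colours of old edges. -/
theorem IsColouring.lend (h : IsColouring c U B) {x : V} (hx : x ∉ U) {A : Finset V}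
    (hA : A ⊆ U) {g : V → Sym2 V} (hg : ∀ a ∈ A, g a ∈ U.sym2)
    (hfree : ∀ a ∈ A, Free c a (c (g a)))
    (hinj : ∀ a ∈ A, ∀ b ∈ A, c (g a) = c (g b) → a = b) :
    ∃ c', IsColouring c' (insert x U) (B ∪ A.image fun a => c (g a)) ∧
      (∀ e ∈ U.sym2, c' e = c e) ∧ ∀ a ∈ A, c' s(x, a) = c (g a) := by
  classical
  let c' : Sym2 V → Sym2 V := fun e =>
    if he : ∃ a ∈ A, e = s(x, a) then c (g he.choose) else c e
  have new : ∀ a ∈ A, c' s(x, a) = c (g a) := by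
    intro a ha
    have he : ∃ b ∈ A, s(x, a) = s(x, b) := ⟨a, ha, rfl⟩
    have := he.choose_spec.2
    have h2 : he.choose = a := by
      have := Sym2.congr_right.1 this
      exact this.symm
    simp only [c', dif_pos he, h2]
  have old : ∀ e, (¬ ∃ a ∈ A, e = s(x, a)) → c' e = c e := fun e he => by
    simp only [c', dif_neg he]
  have notin : ∀ a, s(x, a) ∉ U.sym2 := fun a => by simp [hx]
  have oldU : ∀ e ∈ U.sym2, c' e = c e := fun e he => old e (by
    rintro ⟨a, -, rfl⟩
    exact notin a he)
  have colin : ∀ a ∈ A, c (g a) ∈ U.sym2 := fun a ha => h.inside _ (hg a ha)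
  have notnew : ∀ e, c e ∈ U.sym2 → ∀ a, e ≠ s(x, a) := by
    rintro e he a rfl
    rw [h.outside _ (notin a)] at he
    exact notin a he
  refine ⟨c', ⟨?_, ?_, ?_, ?_⟩, oldU, new⟩
  · have half : ∀ a ∈ A, ∀ f, s(x, a) ≠ f → ∀ y ∈ s(x, a), y ∈ f → c' s(x, a) ≠ c' f := by
      intro a ha f hne y hy hyf heq
      rw [new a ha] at heq
      by_cases hf : ∃ b ∈ A, f = s(x, b)
      · obtain ⟨b, hb, rfl⟩ := hf
        rw [new b hb] at heq
        exact hne (by rw [hinj a ha b hb heq])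
      · rw [old f hf] at heq
        have hfU : f ∈ U.sym2 := by
          by_contra hfU
          have := colin a ha
          rw [heq, h.outside f hfU] at this
          exact hfU this
        rcases Sym2.mem_iff.1 hy with rfl | rfl
        · exact hx (mem_sym2_iff.1 hfU _ hyf)
        · exact hfree _ ha f hyf heq.symm
    intro e f hne y hy hyf heq
    by_cases he : ∃ a ∈ A, e = s(x, a)
    · obtain ⟨a, ha, rfl⟩ := he
      exact half a ha f hne y hy hyf heq
    · by_cases hf : ∃ a ∈ A, f = s(x, a)
      · obtain ⟨a, ha, rfl⟩ := hf
        exact half a ha e hne.symm y hyf hy heq.symm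
      · rw [old e he, old f hf] at heq
        exact h.proper e f hne y hy hyf heq
  · intro e he
    rw [old e, h.outside e fun h' => he (sym2_mono (subset_insert x U) h')]
    rintro ⟨a, ha, rfl⟩
    exact he (by simp [hA ha])
  · intro e he
    by_cases he' : ∃ a ∈ A, e = s(x, a)
    · obtain ⟨a, ha, rfl⟩ := he'
      rw [new a ha]
      exact sym2_mono (subset_insert x U) (colin a ha)
    · rw [old e he']
      exact (h.mono (subset_insert x U)).inside e he
  · intro e₁ e₂ e₃ h₁₂ h₁₃ hB
    have aux : ∀ e, c' e₁ = c' e → c' e = c e := by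
      intro e he
      apply old
      rintro ⟨a, ha, rfl⟩
      apply hB
      rw [he, new a ha]
      exact mem_union_right _ (mem_image_of_mem (fun a => c (g a)) ha)
    have k₁ := aux e₁ rfl
    have k₂ := aux e₂ h₁₂
    have k₃ := aux e₃ h₁₃
    refine h.small e₁ e₂ e₃ (by rw [← k₁, ← k₂, h₁₂]) (by rw [← k₁, ← k₃, h₁₃]) ?_
    rw [← k₁]
    exact fun hmem => hB (mem_union_left _ hmem)

/-- A colour used at most twice is missing from one of any two given vertices, unless it joins
them. -/
theorem IsColouring.free_or_free (h : IsColouring c U B) {b b' a a' : V}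
    (hB : c s(b, b') ∉ B) (hab : a ≠ b) (hab' : a ≠ b') (hab₁ : a' ≠ b) (hab₂ : a' ≠ b')
    (haa : a ≠ a') (hne : c s(a, a') ≠ c s(b, b')) :
    Free c a (c s(b, b')) ∨ Free c a' (c s(b, b')) := by
  by_contra! hcon
  simp only [Free, not_forall, not_not] at hcon
  obtain ⟨⟨e, hae, he⟩, e', hae', he'⟩ := hcon
  rcases h.small s(b, b') e e' he.symm he'.symm hB with rfl | rfl | rfl
  · simp [hab, hab'] at hae
  · simp [hab₁, hab₂] at hae'
  · rw [(Sym2.mem_and_mem_iff haa).1 ⟨hae, hae'⟩] at he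
    exact hne he

theorem IsColouring.exists_free_of_notMem (h : IsColouring c U B) {I : Finset V} (hI : 4 ≤ #I)
    (hr : ¬ HasRepeat c I) {b b' : V} (hb : b ∈ I) (hb' : b' ∈ I) (hbb : b ≠ b')
    (hB : c s(b, b') ∉ B) : ∃ a, (a ∈ I ∧ a ≠ b ∧ a ≠ b') ∧ Free c a (c s(b, b')) := by
  have hcard : 1 < #((I.erase b).erase b') := by
    rw [card_erase_of_mem (mem_erase.2 ⟨hbb.symm, hb'⟩), card_erase_of_mem hb]
    omega
  obtain ⟨a, ha, a', ha', haa⟩ := one_lt_card.1 hcard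
  simp only [mem_erase] at ha ha'
  have hne : c s(a, a') ≠ c s(b, b') := fun heq =>
    hr ⟨a, ha.2.2, a', ha'.2.2, b, hb, b', hb', haa, hbb, by
      simp [ha.1, ha.2.1], heq⟩
  rcases h.free_or_free hB ha.2.1 ha.1 ha'.2.1 ha'.1 haa hne with hf | hf
  · exact ⟨a, ⟨ha.2.2, ha.2.1, ha.1⟩, hf⟩
  · exact ⟨a', ⟨ha'.2.2, ha'.2.1, ha'.1⟩, hf⟩

/-- In a set without repeated colours some edge can lend its colour to the edge joining a new
vertex to a third vertex. -/
theorem IsColouring.exists_free (h : IsColouring c U B) {I : Finset V} (hI : 4 ≤ #I)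
    (hr : ¬ HasRepeat c I) {D : Finset (Sym2 V)} (hBD : B ⊆ D) (hD : #D ≤ 5) :
    ∃ a ∈ I, ∃ b ∈ I, ∃ b' ∈ I, b ≠ b' ∧ c s(b, b') ∉ D ∧ Free c a (c s(b, b')) := by
  have hcard : 6 ≤ #(I.offDiag.image fun q => s(q.1, q.2)) := by
    have h₁ : #(I.offDiag.image fun q => s(q.1, q.2)) = (#I).choose 2 := Sym2.card_image_offDiag I
    rw [h₁]
    exact (Nat.choose_le_choose 2 hI)
  have hinj : Set.InjOn c (I.offDiag.image fun q => s(q.1, q.2) : Finset (Sym2 V)) := by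
    intro e he f hf hef
    simp only [coe_image, Set.mem_image, mem_coe, mem_offDiag, Prod.exists] at he hf
    obtain ⟨a, b, ⟨ha, hb, hab⟩, rfl⟩ := he
    obtain ⟨a', b', ⟨ha', hb', hab'⟩, rfl⟩ := hf
    by_contra hne
    exact hr ⟨a, ha, b, hb, a', ha', b', hb', hab, hab', hne, hef⟩
  obtain ⟨e, he, heD⟩ : ∃ e ∈ I.offDiag.image fun q => s(q.1, q.2), c e ∉ D := by
    by_contra! hcon
    have := card_le_card_of_injOn c hcon hinj
    omega
  simp only [mem_image, mem_offDiag, Prod.exists] at he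
  obtain ⟨b, b', ⟨hb, hb', hbb⟩, rfl⟩ := he
  obtain ⟨a, ha, hf⟩ := h.exists_free_of_notMem hI hr hb hb' hbb (fun h' => heD (hBD h'))
  exact ⟨a, ha.1, b, hb, b', hb', hbb, heD, hf⟩

/-- As `exists_free`, with the lending edge passing through a prescribed vertex. -/
theorem IsColouring.exists_free_through (h : IsColouring c U B) {I : Finset V} (hI : 4 ≤ #I)
    (hr : ¬ HasRepeat c I) (hB : #B ≤ 2) {p : V} (hp : p ∈ I) :
    ∃ a ∈ I, ∃ b ∈ I, a ≠ p ∧ p ≠ b ∧ c s(p, b) ∉ B ∧ Free c a (c s(p, b)) := by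
  obtain ⟨b, hb, hbB⟩ : ∃ b ∈ I.erase p, c s(p, b) ∉ B := by
    by_contra! hcon
    have := card_le_card_of_injOn (s := I.erase p) (t := B) (fun b => c s(p, b)) hcon (by
      intro a _ b _ hab
      by_contra hne
      exact h.proper s(p, a) s(p, b) (fun h' => hne (Sym2.congr_right.1 h')) p (by simp) (by simp) hab)
    rw [card_erase_of_mem hp] at this
    omega
  obtain ⟨hpb, hb⟩ := mem_erase.1 hb
  obtain ⟨a, ha, hf⟩ := h.exists_free_of_notMem hI hr hp hb hpb.symm hbB
  exact ⟨a, ha.1, b, hb, ha.2.1, hpb.symm, hbB, hf⟩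

/-- Colours of edges inside `U` assigned to the edges from a new vertex to `A`. -/
structure Lends (c : Sym2 V → Sym2 V) (U A : Finset V) (g : V → Sym2 V) : Prop where
  subset : A ⊆ U
  mem : ∀ a ∈ A, g a ∈ U.sym2
  free : ∀ a ∈ A, Free c a (c (g a))
  inj : ∀ a ∈ A, ∀ b ∈ A, c (g a) = c (g b) → a = b

/-- After lending, the set `I` together with the new vertex has a repeated colour. -/
def Handles (c : Sym2 V → Sym2 V) (A : Finset V) (g : V → Sym2 V) (I : Finset V) : Prop :=
  HasRepeat c I ∨ ∃ a ∈ A, a ∈ I ∧ ∃ b ∈ I, ∃ b' ∈ I, b ≠ b' ∧ c (g a) = c s(b, b')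

theorem lends_empty {g : V → Sym2 V} : Lends c U ∅ g where
  subset := empty_subset U
  mem := by simp
  free := by simp
  inj := by simp

theorem lends_singleton {a : V} {e : Sym2 V} (ha : a ∈ U) (he : e ∈ U.sym2)
    (hf : Free c a (c e)) : Lends c U {a} fun _ => e where
  subset := by simpa
  mem _ _ := he
  free := by simpa
  inj := by simp

/-- A further vertex can be added to the vertices that receive a colour. -/
theorem Lends.cons {A : Finset V} {g : V → Sym2 V} (h : Lends c U A g) {a : V} {e : Sym2 V}
    (haA : a ∉ A) (ha : a ∈ U) (he : e ∈ U.sym2) (hf : Free c a (c e))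
    (hne : ∀ b ∈ A, c (g b) ≠ c e) : Lends c U (insert a A) (Function.update g a e) := by
  have hg : ∀ b ∈ A, Function.update g a e b = g b := fun b hb =>
    Function.update_of_ne (by rintro rfl; exact haA hb) _ _
  refine ⟨?_, ?_, ?_, ?_⟩
  · exact insert_subset ha h.subset
  · simp only [forall_mem_insert, Function.update_self]
    exact ⟨he, fun b hb => by rw [hg b hb]; exact h.mem b hb⟩
  · simp only [forall_mem_insert, Function.update_self]
    exact ⟨hf, fun b hb => by rw [hg b hb]; exact h.free b hb⟩
  · simp only [forall_mem_insert, Function.update_self]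
    refine ⟨⟨by simp, fun b hb heq => ?_⟩, fun b hb => ⟨fun heq => ?_, fun b' hb' heq => ?_⟩⟩
    · rw [hg b hb] at heq
      exact absurd heq.symm (hne b hb)
    · rw [hg b hb] at heq
      exact absurd heq (hne b hb)
    · rw [hg b hb, hg b' hb'] at heq
      exact h.inj b hb b' hb' heq

theorem Handles.cons {A I : Finset V} {g : V → Sym2 V} (h : Handles c A g I) {a : V}
    {e : Sym2 V} (haA : a ∉ A) : Handles c (insert a A) (Function.update g a e) I := by
  obtain h | ⟨b, hb, hbI, hx⟩ := h
  · exact Or.inl h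
  · refine Or.inr ⟨b, mem_insert_of_mem hb, hbI, ?_⟩
    rwa [Function.update_of_ne (by rintro rfl; exact haA hb)]

theorem handles_insert {A I : Finset V} {g : V → Sym2 V} {a b b' : V} (ha : a ∈ I) (hb : b ∈ I)
    (hb' : b' ∈ I) (hne : b ≠ b') :
    Handles c (insert a A) (Function.update g a s(b, b')) I :=
  Or.inr ⟨a, mem_insert_self a A, ha, b, hb, b', hb', hne, by rw [Function.update_self]⟩

theorem IsColouring.exists_lends_one (h : IsColouring c U B) {I : Finset V} (hIU : I ⊆ U)
    (hI : 4 ≤ #I) {D : Finset (Sym2 V)} (hBD : B ⊆ D) (hD : #D ≤ 5) :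
    ∃ A g, Lends c U A g ∧ #A ≤ 1 ∧ Handles c A g I := by
  by_cases hr : HasRepeat c I
  · exact ⟨∅, fun _ => s(hr.choose, hr.choose), lends_empty, by simp, Or.inl hr⟩
  · obtain ⟨a, ha, b, hb, b', hb', hbb, -, hf⟩ := h.exists_free hI hr hBD hD
    exact ⟨{a}, fun _ => s(b, b'),
      lends_singleton (hIU ha) (mk_mem_sym2_iff.2 ⟨hIU hb, hIU hb'⟩) hf, by simp,
      Or.inr ⟨a, by simp, ha, b, hb, b', hb', hbb, rfl⟩⟩

theorem IsColouring.exists_lends_two (h : IsColouring c U B) {I J : Finset V} (hIU : I ⊆ U)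
    (hJU : J ⊆ U) (hI : 4 ≤ #I) (hJ : 4 ≤ #J) (hB : #B ≤ 2) :
    ∃ A g, Lends c U A g ∧ #A ≤ 2 ∧ Handles c A g I ∧ Handles c A g J := by
  by_cases hrI : HasRepeat c I
  · obtain ⟨A, g, h₁, h₂, h₃⟩ := h.exists_lends_one hJU hJ subset_rfl (by omega)
    exact ⟨A, g, h₁, by omega, Or.inl hrI, h₃⟩
  by_cases hrJ : HasRepeat c J
  · obtain ⟨A, g, h₁, h₂, h₃⟩ := h.exists_lends_one hIU hI subset_rfl (by omega)
    exact ⟨A, g, h₁, by omega, h₃, Or.inl hrJ⟩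
  obtain ⟨p, hp, b, hb, b', hb', hbb, -, hf⟩ := h.exists_free hI hrI subset_rfl (by omega)
  have h₁ : Lends c U {p} fun _ => s(b, b') :=
    lends_singleton (hIU hp) (mk_mem_sym2_iff.2 ⟨hIU hb, hIU hb'⟩) hf
  have h₂ : Handles c {p} (fun _ => s(b, b')) I :=
    Or.inr ⟨p, by simp, hp, b, hb, b', hb', hbb, rfl⟩
  by_cases hpJ : p ∈ J
  · obtain ⟨a, ha, d, hd, hap, hpd, -, hfa⟩ := h.exists_free_through hJ hrJ hB hpJ
    have haA : a ∉ ({p} : Finset V) := by simpa using hap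
    refine ⟨insert a {p}, _, h₁.cons haA (hJU ha)
      (mk_mem_sym2_iff.2 ⟨hJU hpJ, hJU hd⟩) hfa ?_, card_le_two, h₂.cons haA,
      handles_insert ha hpJ hd hpd⟩
    intro q hq heq
    rw [mem_singleton] at hq
    exact hf s(p, d) (by simp) heq.symm
  · obtain ⟨a, ha, d, hd, d', hd', hdd, hD, hfa⟩ := h.exists_free hJ hrJ
      (D := insert (c s(b, b')) B) (subset_insert _ _)
      ((card_insert_le _ _).trans (by omega))
    have haA : a ∉ ({p} : Finset V) := by
      rw [mem_singleton]
      rintro rfl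
      exact hpJ ha
    refine ⟨insert a {p}, _, h₁.cons haA (hJU ha)
      (mk_mem_sym2_iff.2 ⟨hJU hd, hJU hd'⟩) hfa ?_, card_le_two, h₂.cons haA,
      handles_insert ha hd hd' hdd⟩
    intro q hq heq
    exact hD (heq ▸ mem_insert_self _ _)

/-- Lending the colours of two edges at `o`. -/
theorem exists_lends_of_disjoint (hc : ∀ e f, e ≠ f → ∀ x ∈ e, x ∈ f → c e ≠ c f)
    {C : Finset V} (hCU : C ⊆ U) {o y a z b : V} (ho : o ∈ C) (hy : y ∈ C) (ha : a ∈ C)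
    (hz : z ∈ C) (hb : b ∈ C) (hoy : o ≠ y) (hoz : o ≠ z) (hyz : y ≠ z) (hyb : y ≠ b) (haz : a ≠ z)
    (hab : a ≠ b) (hfa : Free c a (c s(o, y))) (hfb : Free c b (c s(o, z))) :
    ∃ A g, Lends c U A g ∧ #A ≤ 2 ∧ ∀ v ∈ C, v ≠ o → Handles c A g (C.erase v) := by
  have hbA : b ∉ ({a} : Finset V) := by simpa using hab.symm
  refine ⟨insert b {a}, _, (lends_singleton (e := s(o, y)) (hCU ha)
      (mk_mem_sym2_iff.2 ⟨hCU ho, hCU hy⟩) hfa).cons (e := s(o, z)) hbA (hCU hb)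
      (mk_mem_sym2_iff.2 ⟨hCU ho, hCU hz⟩) hfb ?_, card_le_two, ?_⟩
  · intro q hq
    exact hc _ _ (fun h' => hyz (Sym2.congr_right.1 h')) o (by simp) (by simp)
  · intro v hv hvo
    by_cases h' : v = z ∨ v = b
    · apply Handles.cons _ hbA
      exact Or.inr ⟨a, by simp, by grind, o, by grind, y, by grind, hoy, rfl⟩
    · exact handles_insert (by grind) (by grind) (by grind) hoz

/-- Lending the colours of three edges at `o` cyclically. -/
theorem exists_lends_of_triangle (hc : ∀ e f, e ≠ f → ∀ x ∈ e, x ∈ f → c e ≠ c f)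
    {C : Finset V} (hCU : C ⊆ U) {o y z w : V} (ho : o ∈ C) (hy : y ∈ C) (hz : z ∈ C)
    (hw : w ∈ C) (hoy : o ≠ y) (hoz : o ≠ z) (how : o ≠ w) (hyz : y ≠ z) (hyw : y ≠ w)
    (hzw : z ≠ w) (h₁ : Free c z (c s(o, y))) (h₂ : Free c w (c s(o, z)))
    (h₃ : Free c y (c s(o, w))) :
    ∃ A g, Lends c U A g ∧ #A ≤ 4 ∧ ∀ v ∈ C, v ≠ o → Handles c A g (C.erase v) := by
  have hzA : z ∉ ({w} : Finset V) := by simpa using hzw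
  have hyA : y ∉ ({z, w} : Finset V) := by simp [hyz, hyw]
  refine ⟨insert y {z, w}, _, ((lends_singleton (e := s(o, z)) (hCU hw)
      (mk_mem_sym2_iff.2 ⟨hCU ho, hCU hz⟩) h₂).cons (e := s(o, y)) hzA (hCU hz)
      (mk_mem_sym2_iff.2 ⟨hCU ho, hCU hy⟩) h₁ ?_).cons (e := s(o, w)) hyA (hCU hy)
      (mk_mem_sym2_iff.2 ⟨hCU ho, hCU hw⟩) h₃ ?_, card_le_three.trans (by omega), ?_⟩
  · intro q hq
    exact hc _ _ (fun h' => hyz.symm (Sym2.congr_right.1 h')) o (by simp) (by simp)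
  · intro q hq
    rcases mem_insert.1 hq with rfl | hq
    · rw [Function.update_self]
      exact hc _ _ (fun h' => hyw (Sym2.congr_right.1 h')) o (by simp) (by simp)
    · rw [mem_singleton] at hq
      subst hq
      rw [Function.update_of_ne hzw.symm]
      exact hc _ _ (fun h' => hzw (Sym2.congr_right.1 h')) o (by simp) (by simp)
  · intro v hv hvo
    by_cases hvy : v = y
    · apply Handles.cons _ hyA
      apply Handles.cons _ hzA
      exact Or.inr ⟨w, by simp, by grind, o, by grind, z, by grind, hoz, rfl⟩
    · by_cases hvz : v = z
      · exact handles_insert (by grind) (by grind) (by grind) how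
      · by_cases hvw : v = w
        · apply Handles.cons _ hyA
          exact handles_insert (by grind) (by grind) (by grind) hoy
        · exact handles_insert (by grind) (by grind) (by grind) how

theorem IsColouring.exists_lends_of_three (h : IsColouring c U B) {C : Finset V} (hCU : C ⊆ U)
    (hrep : ∀ a ∈ C, ∀ b ∈ C, ∀ a' ∈ C, ∀ b' ∈ C, a ≠ b → a' ≠ b' → s(a, b) ≠ s(a', b') →
      c s(a, b) = c s(a', b') → c s(a, b) ∈ B)
    {o y₁ y₂ y₃ t : V} (ho : o ∈ C) (hy₁ : y₁ ∈ C) (hy₂ : y₂ ∈ C) (hy₃ : y₃ ∈ C) (ht : t ∈ C)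
    (hd : [o, y₁, y₂, y₃, t].Nodup) (h₁ : c s(o, y₁) ∉ B) (h₂ : c s(o, y₂) ∉ B)
    (h₃ : c s(o, y₃) ∉ B) :
    ∃ A g, Lends c U A g ∧ #A ≤ 4 ∧ ∀ v ∈ C, v ≠ o → Handles c A g (C.erase v) := by
  have key : ∀ y ∈ C, o ≠ y → c s(o, y) ∉ B → ∀ a ∈ C, ∀ a' ∈ C, a ≠ o → a ≠ y → a' ≠ o →
      a' ≠ y → a ≠ a' → Free c a (c s(o, y)) ∨ Free c a' (c s(o, y)) := by
    intro y hy hoy hB a ha a' ha' h1 h2 h3 h4 h5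
    refine h.free_or_free hB h1 h2 h3 h4 h5 fun heq => hB ?_
    rw [← heq]
    exact hrep a ha a' ha' o ho y hy h5 hoy (by simp [h1, h2]) heq
  simp only [List.nodup_cons, List.mem_cons, List.not_mem_nil, not_or] at hd
  have cyc : ∀ y₁ ∈ C, ∀ y₂ ∈ C, ∀ y₃ ∈ C, o ≠ y₁ → o ≠ y₂ → o ≠ y₃ → y₁ ≠ y₂ → y₁ ≠ y₃ →
      y₂ ≠ y₃ → y₁ ≠ t → y₂ ≠ t → y₃ ≠ t → c s(o, y₁) ∉ B → c s(o, y₂) ∉ B → c s(o, y₃) ∉ B →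
      ¬ Free c y₂ (c s(o, y₁)) →
      ∃ A g, Lends c U A g ∧ #A ≤ 4 ∧ ∀ v ∈ C, v ≠ o → Handles c A g (C.erase v) := by
    intro y₁ hy₁ y₂ hy₂ y₃ hy₃ o1 o2 o3 n12 n13 n23 t1 t2 t3 b1 b2 b3 hn
    have f13 := (key y₁ hy₁ o1 b1 y₂ hy₂ y₃ hy₃ (by grind) (by grind) (by grind) (by grind)
      (by grind)).resolve_left hn
    have f1t := (key y₁ hy₁ o1 b1 y₂ hy₂ t ht (by grind) (by grind) (by grind) (by grind)
      (by grind)).resolve_left hn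
    have lift : ∀ {P : Finset V → (V → Sym2 V) → Prop}, (∃ A g, Lends c U A g ∧ #A ≤ 2 ∧ P A g) →
        ∃ A g, Lends c U A g ∧ #A ≤ 4 ∧ P A g := by
      rintro P ⟨A, g, i, j, l⟩
      exact ⟨A, g, i, by omega, l⟩
    by_cases f23 : Free c y₃ (c s(o, y₂))
    · exact lift (exists_lends_of_disjoint h.proper hCU ho hy₁ ht hy₂ hy₃ o1 o2 n12
        n13 (by grind) (by grind) f1t f23)
    by_cases f32 : Free c y₂ (c s(o, y₃))
    · exact lift (exists_lends_of_disjoint h.proper hCU ho hy₁ ht hy₃ hy₂ o1 o3 n13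
        n12 (by grind) (by grind) f1t f32)
    have f2t := (key y₂ hy₂ o2 b2 y₃ hy₃ t ht (by grind) (by grind) (by grind) (by grind)
      (by grind)).resolve_left f23
    exact lift (exists_lends_of_disjoint h.proper hCU ho hy₁ hy₃ hy₂ ht o1 o2 n12
      t1 n23.symm t3 f13 f2t)
  by_cases f12 : Free c y₂ (c s(o, y₁))
  · by_cases f23 : Free c y₃ (c s(o, y₂))
    · by_cases f31 : Free c y₁ (c s(o, y₃))
      · exact exists_lends_of_triangle h.proper hCU ho hy₁ hy₂ hy₃ (by grind) (by grind) (by grind)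
          (by grind) (by grind) (by grind) f12 f23 f31
      · apply cyc y₃ hy₃ y₁ hy₁ y₂ hy₂ <;> grind
    · apply cyc y₂ hy₂ y₃ hy₃ y₁ hy₁ <;> grind
  · apply cyc y₁ hy₁ y₂ hy₂ y₃ hy₃ <;> grind

set_option linter.unusedSimpArgs false in
/-- All subsets of `C` missing one vertex can be handled when `C` has a repeated colour. -/
theorem IsColouring.exists_lends_clique (h : IsColouring c U B) {C : Finset V} (hCU : C ⊆ U)
    (hC : 5 ≤ #C) (hr : HasRepeat c C) (hB : #B ≤ 2) :
    ∃ A g, Lends c U A g ∧ (#A ≤ 2 ∨ #A ≤ 4 ∧ 1 ≤ #B) ∧ ∀ v ∈ C, Handles c A g (C.erase v) := by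
  have disj : ∀ {p q r s : V}, s(p, q) ≠ s(r, s) → c s(p, q) = c s(r, s) →
      p ≠ r ∧ p ≠ s ∧ q ≠ r ∧ q ≠ s := by
    intro p q r s hne heq
    refine ⟨?_, ?_, ?_, ?_⟩ <;> rintro rfl
    · exact h.proper _ _ hne p (by simp) (by simp) heq
    · exact h.proper _ _ hne p (by simp) (by simp) heq
    · exact h.proper _ _ hne q (by simp) (by simp) heq
    · exact h.proper _ _ hne q (by simp) (by simp) heq
  have fifth : ∀ p q r s : V, ∃ o ∈ C, o ≠ p ∧ o ≠ q ∧ o ≠ r ∧ o ≠ s := by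
    intro p q r s
    obtain ⟨o, ho, ho'⟩ := exists_mem_notMem_of_card_lt_card
      (s := ({p, q, r, s} : Finset V)) (t := C) (card_le_four.trans_lt (by omega))
    exact ⟨o, ho, by simpa using ho'⟩
  by_cases hrep : ∀ a ∈ C, ∀ b ∈ C, ∀ a' ∈ C, ∀ b' ∈ C, a ≠ b → a' ≠ b' → s(a, b) ≠ s(a', b') →
      c s(a, b) = c s(a', b') → c s(a, b) ∈ B
  · obtain ⟨p, hp, q, hq, r, hr, s, hs, hpq, hrs, hne, heq⟩ := hr
    obtain ⟨o, ho, op, oq, or, os⟩ := fifth p q r s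
    obtain ⟨pr, ps, qr, qs⟩ := disj hne heq
    have hγ := hrep p hp q hq r hr s hs hpq hrs hne heq
    have hB' : #(B.erase (c s(p, q))) ≤ 1 := by
      rw [card_erase_of_mem hγ]
      omega
    have hγ' : ∀ z, z = p ∨ z = q ∨ z = r ∨ z = s → c s(o, z) ≠ c s(p, q) := by
      rintro z (rfl | rfl | rfl | rfl)
      · exact h.proper _ _ (by simp [op, oq]) z (by simp) (by simp)
      · exact h.proper _ _ (by simp [op, oq]) z (by simp) (by simp)
      · rw [heq]
        exact h.proper _ _ (by simp [or, os]) z (by simp) (by simp)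
      · rw [heq]
        exact h.proper _ _ (by simp [or, os]) z (by simp) (by simp)
    have bad : ∀ z w, (z = p ∨ z = q ∨ z = r ∨ z = s) → (w = p ∨ w = q ∨ w = r ∨ w = s) →
        z ≠ w → c s(o, z) ∈ B → c s(o, w) ∉ B := by
      intro z w hz hw hzw hzB hwB
      exact h.proper s(o, z) s(o, w) (fun h' => hzw (Sym2.congr_right.1 h')) o (by simp) (by simp)
        (card_le_one.1 hB' _ (mem_erase.2 ⟨hγ' z hz, hzB⟩) _ (mem_erase.2 ⟨hγ' w hw, hwB⟩))
    have main : ∃ A g, Lends c U A g ∧ #A ≤ 4 ∧ ∀ v ∈ C, v ≠ o → Handles c A g (C.erase v) := by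
      by_cases bp : c s(o, p) ∈ B
      · exact h.exists_lends_of_three hCU hrep ho hq hr hs hp (by
          simp [op, oq, or, os, hpq, hrs, pr, ps, qr, qs, hpq.symm, hrs.symm, pr.symm, ps.symm,
            qr.symm, qs.symm])
          (bad p q (by simp) (by simp) hpq bp) (bad p r (by simp) (by simp) pr bp)
          (bad p s (by simp) (by simp) ps bp)
      by_cases bq : c s(o, q) ∈ B
      · exact h.exists_lends_of_three hCU hrep ho hp hr hs hq (by
          simp [op, oq, or, os, hpq, hrs, pr, ps, qr, qs, hpq.symm, hrs.symm, pr.symm, ps.symm,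
            qr.symm, qs.symm])
          bp (bad q r (by simp) (by simp) qr bq)
          (bad q s (by simp) (by simp) qs bq)
      by_cases br : c s(o, r) ∈ B
      · exact h.exists_lends_of_three hCU hrep ho hp hq hs hr (by
          simp [op, oq, or, os, hpq, hrs, pr, ps, qr, qs, hpq.symm, hrs.symm, pr.symm, ps.symm,
            qr.symm, qs.symm])
          bp bq (bad r s (by simp) (by simp) hrs br)
      · exact h.exists_lends_of_three hCU hrep ho hp hq hr hs (by
          simp [op, oq, or, os, hpq, hrs, pr, ps, qr, qs, hpq.symm, hrs.symm, pr.symm, ps.symm,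
            qr.symm, qs.symm]) bp bq br
    obtain ⟨A, g, h₁, h₂, h₃⟩ := main
    refine ⟨A, g, h₁, Or.inr ⟨h₂, card_pos.2 ⟨_, hγ⟩⟩, fun v hv => ?_⟩
    by_cases hvo : v = o
    · subst hvo
      exact Or.inl ⟨p, mem_erase.2 ⟨op.symm, hp⟩, q, mem_erase.2 ⟨oq.symm, hq⟩, r,
        mem_erase.2 ⟨or.symm, hr⟩, s, mem_erase.2 ⟨os.symm, hs⟩, hpq, hrs, hne, heq⟩
    · exact h₃ v hv hvo
  · push Not at hrep
    obtain ⟨p, hp, q, hq, r, hr, s, hs, hpq, hrs, hne, heq, hγ⟩ := hrep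
    obtain ⟨o, ho, op, oq, or, os⟩ := fifth p q r s
    obtain ⟨pr, ps, qr, qs⟩ := disj hne heq
    have hf : Free c o (c s(p, q)) := by
      intro e hoe he
      rcases h.small s(p, q) s(r, s) e heq he.symm hγ with h' | rfl | rfl
      · exact hne h'
      · simp [op, oq] at hoe
      · simp [or, os] at hoe
    refine ⟨{o}, fun _ => s(p, q), lends_singleton (hCU ho)
      (mk_mem_sym2_iff.2 ⟨hCU hp, hCU hq⟩) hf, Or.inl (by simp), fun v hv => ?_⟩
    by_cases hvo : v = o
    · subst hvo
      exact Or.inl ⟨p, mem_erase.2 ⟨op.symm, hp⟩, q, mem_erase.2 ⟨oq.symm, hq⟩, r,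
        mem_erase.2 ⟨or.symm, hr⟩, s, mem_erase.2 ⟨os.symm, hs⟩, hpq, hrs, hne, heq⟩
    · refine Or.inr ⟨o, by simp, mem_erase.2 ⟨Ne.symm hvo, ho⟩, ?_⟩
      by_cases h' : v = p ∨ v = q
      · refine ⟨r, mem_erase.2 ⟨?_, hr⟩, s, mem_erase.2 ⟨?_, hs⟩, hrs, heq⟩ <;>
          rcases h' with rfl | rfl <;> simp [pr.symm, ps.symm, qr.symm, qs.symm]
      · rw [not_or] at h'
        exact ⟨p, mem_erase.2 ⟨Ne.symm h'.1, hp⟩, q, mem_erase.2 ⟨Ne.symm h'.2, hq⟩, hpq, rfl⟩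

end Colouring

section Count

variable {V : Type*} (G : SimpleGraph V) [DecidableRel G.Adj]

/-- The number of neighbours of `x` in `U`. -/
def degIn (U : Finset V) (x : V) : ℕ := #{w ∈ U | G.Adj x w}

/-- The number of adjacent pairs in `A × U`. -/
def adjPairs (A U : Finset V) : ℕ := ∑ a ∈ A, degIn G U a

/-- `k + 1` times the number of vertices minus twice the number of edges inside `U`. -/
def slack (k : ℕ) (U : Finset V) : ℤ := ((k : ℤ) + 1) * #U - adjPairs G U U

variable {G} {k : ℕ} {U N : Finset V}

theorem adjPairs_comm (A B : Finset V) : adjPairs G A B = adjPairs G B A := by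
  have := sum_card_bipartiteAbove_eq_sum_card_bipartiteBelow (s := A) (t := B) G.Adj
  simpa only [adjPairs, degIn, bipartiteAbove, bipartiteBelow, G.adj_comm] using this

theorem card_le_degIn {S : Finset V} {x : V} (hS : S ⊆ U) (h : ∀ w ∈ S, G.Adj x w) :
    #S ≤ degIn G U x :=
  card_le_card fun w hw => mem_filter.2 ⟨hS hw, h w hw⟩

variable [DecidableEq V]

theorem degIn_union (h : Disjoint U N) (x : V) :
    degIn G (U ∪ N) x = degIn G U x + degIn G N x := by
  rw [degIn, filter_union, card_union_of_disjoint (disjoint_filter_filter h)]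
  rfl

theorem slack_union (h : Disjoint U N) :
    slack G k (U ∪ N) = slack G k U + (k + 1) * #N - adjPairs G N N - 2 * adjPairs G N U := by
  have h₁ : adjPairs G (U ∪ N) (U ∪ N) =
      adjPairs G U U + adjPairs G N U + (adjPairs G N U + adjPairs G N N) := by
    rw [adjPairs, sum_union h]
    simp only [degIn_union h, sum_add_distrib]
    change adjPairs G U U + adjPairs G U N + (adjPairs G N U + adjPairs G N N) = _
    rw [adjPairs_comm U N]
  rw [slack, slack, card_union_of_disjoint h, h₁]
  push_cast
  ring

theorem slack_insert {x : V} (h : x ∉ U) :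
    slack G k (insert x U) = slack G k U + (k + 1) - 2 * degIn G U x := by
  rw [insert_eq, union_comm, slack_union (disjoint_singleton_right.2 h)]
  simp [adjPairs, degIn, filter_singleton]

theorem adjPairs_clique {m : ℕ} (h : G.IsNClique m N) : adjPairs G N N = m * (m - 1) := by
  have : ∀ a ∈ N, degIn G N a = m - 1 := by
    intro a ha
    rw [degIn, ← h.card_eq, ← card_erase_of_mem ha]
    congr 1
    ext b
    simp only [mem_filter, mem_erase]
    refine ⟨fun hb => ⟨hb.2.ne', hb.1⟩, fun hb => ⟨hb.2, h.isClique ha hb.2 (Ne.symm hb.1)⟩⟩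
  rw [adjPairs, sum_const_nat this, h.card_eq]

theorem slack_clique (h : G.IsNClique k N) : slack G k N = 2 * k := by
  rw [slack, adjPairs_clique h, h.card_eq]
  cases k with
  | zero => simp
  | succ k =>
    rw [Nat.add_sub_cancel]
    push_cast
    ring

/-- Density at most `(k + 1) / 2` forces positive slack. -/
theorem slack_pos [Fintype V] (hm : ∀ J : G.Subgraph, J.verts.Nonempty →
      (J.edgeSet.ncard : ℝ) / (J.verts.ncard : ℝ) < ((k : ℝ) + 1) / 2) (hU : U.Nonempty) :
    0 < slack G k U := by
  classical
  let J : G.Subgraph := (⊤ : G.Subgraph).induce (U : Set V)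
  have hJ := hm J (by simpa [J] using hU)
  have hv : J.verts.ncard = #U := by simp [J]
  have hpos : (0 : ℝ) < #U := by exact_mod_cast card_pos.2 hU
  rw [hv, div_lt_div_iff₀ hpos (by norm_num)] at hJ
  have he : 2 * J.edgeSet.ncard = adjPairs G U U := by
    have h1 : J.edgeSet.ncard = #J.spanningCoe.edgeFinset := by
      rw [Set.ncard_eq_toFinset_card', SimpleGraph.edgeFinset]
      congr 1
      ext e
      simp
    rw [h1, ← SimpleGraph.sum_degrees_eq_twice_card_edges, adjPairs]
    have h2 : ∀ a, J.spanningCoe.degree a = if a ∈ U then degIn G U a else 0 := by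
      intro a
      rw [← SimpleGraph.card_neighborFinset_eq_degree]
      split_ifs with ha
      · rw [degIn]
        congr 1
        ext b
        simp [J, ha]
      · rw [card_eq_zero]
        ext b
        simp [J, ha]
    simp only [h2]
    rw [← sum_filter]
    congr 1
    ext; simp
  have h3 : ((adjPairs G U U : ℕ) : ℝ) < (k + 1) * #U := by
    rw [← he]
    push_cast
    linarith
  have h4 : ((adjPairs G U U : ℕ) : ℤ) < (k + 1) * #U := by exact_mod_cast h3
  rw [slack]
  omega

end Count

section Step

variable {V : Type*} [DecidableEq V] (G : SimpleGraph V) [DecidableRel G.Adj] (k : ℕ)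

/-- `I` is a clique in `U` that together with the vertex `x` forms a `k`-clique. -/
def IsAttached (U : Finset V) (x : V) (I : Finset V) : Prop :=
  I ⊆ U ∧ G.IsNClique (k - 1) I ∧ ∀ y ∈ I, G.Adj x y

open Classical in
/-- The union of the cliques of `U` attached to `x`. -/
noncomputable def reach (U : Finset V) (x : V) : Finset V :=
  {w ∈ U | ∃ I, IsAttached G k U x I ∧ w ∈ I}

/-- The number `β` of heavily used colours is small as long as the slack `σ` is large. -/
def Budget (β : ℕ) (σ : ℤ) : Prop :=
  (k + 3 < σ → β = 0) ∧ (k + 1 < σ → β ≤ 1) ∧ (k ≤ σ → β ≤ 2) ∧ (k - 2 ≤ σ → β ≤ 5)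

/-- A colouring of the edges inside `U` with a repeated colour in every `k`-clique. -/
structure Colours (c : Sym2 V → Sym2 V) (U : Finset V) (B : Finset (Sym2 V)) : Prop
    extends IsColouring c U B where
  hasRepeat : ∀ K ⊆ U, G.IsNClique k K → HasRepeat c K

/-- The set `U` has been coloured, and can be extended further. -/
structure IsStage (U : Finset V) : Prop where
  exists_clique : ∃ s ⊆ U, G.IsNClique k s
  slack_le : slack G k U ≤ 2 * k
  card_reach_le : ∀ x ∉ U, #(reach G k U x) ≤ k
  exists_colours : ∃ c B, Colours G k c U B ∧ Budget k #B (slack G k U)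

variable {G k} {U I : Finset V} {x : V}

theorem mem_reach {w : V} : w ∈ reach G k U x ↔ ∃ I, IsAttached G k U x I ∧ w ∈ I := by
  classical
  rw [reach, mem_filter]
  exact ⟨fun h => h.2, fun ⟨I, h, hw⟩ => ⟨h.1 hw, I, h, hw⟩⟩

theorem IsAttached.subset_reach (h : IsAttached G k U x I) : I ⊆ reach G k U x :=
  fun _ hw => mem_reach.2 ⟨I, h, hw⟩

theorem reach_subset : reach G k U x ⊆ U := fun _ hw => by
  obtain ⟨I, h, hwI⟩ := mem_reach.1 hw
  exact h.1 hwI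

theorem adj_of_mem_reach {w : V} (hw : w ∈ reach G k U x) : G.Adj x w := by
  obtain ⟨I, h, hwI⟩ := mem_reach.1 hw
  exact h.2.2 w hwI

theorem card_reach_le_degIn : #(reach G k U x) ≤ degIn G U x :=
  card_le_degIn reach_subset fun _ => adj_of_mem_reach

theorem isAttached_erase {K : Finset V} (hK : G.IsNClique k K) (hx : x ∈ K)
    (hKU : K ⊆ insert x U) : IsAttached G k U x (K.erase x) := by
  refine ⟨subset_insert_iff.1 hKU, ⟨hK.isClique.subset (coe_subset.2 (erase_subset _ _)), ?_⟩,
    fun y hy => hK.isClique hx (mem_of_mem_erase hy) (mem_erase.1 hy).1.symm⟩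
  rw [card_erase_of_mem hx, hK.card_eq]

theorem IsAttached.isNClique_insert (h : IsAttached G k U x I) (hk : 1 ≤ k) :
    G.IsNClique k (insert x I) := by
  have := h.2.1.insert h.2.2
  rwa [Nat.sub_add_cancel hk] at this

theorem HasRepeat.mono {c : Sym2 V → Sym2 V} {s t : Finset V} (h : HasRepeat c s) (hst : s ⊆ t) :
    HasRepeat c t := by
  obtain ⟨a, ha, b, hb, a', ha', b', hb', h⟩ := h
  exact ⟨a, hst ha, b, hst hb, a', hst ha', b', hst hb', h⟩

theorem Colours.lend {c : Sym2 V → Sym2 V} {B : Finset (Sym2 V)} (h : Colours G k c U B)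
    (hx : x ∉ U) {A : Finset V} {g : V → Sym2 V} (hA : Lends c U A g)
    (hI : ∀ I, IsAttached G k U x I → Handles c A g I) :
    ∃ c' B', Colours G k c' (insert x U) B' ∧ #B' ≤ #B + #A := by
  obtain ⟨c', h', hold, hnew⟩ := h.toIsColouring.lend hx hA.subset hA.mem hA.free hA.inj
  refine ⟨c', _, ⟨h', fun K hKU hK => ?_⟩,
    (card_union_le _ _).trans (Nat.add_le_add_left card_image_le _)⟩
  by_cases hxK : x ∈ K
  · have hat := isAttached_erase hK hxK hKU
    obtain hr | ⟨a, haA, ha, b, hb, b', hb', hne, heq⟩ := hI _ hat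
    · exact (hr.congr hat.1 hold).mono (erase_subset _ _)
    · refine ⟨x, hxK, a, mem_of_mem_erase ha, b, mem_of_mem_erase hb, b', mem_of_mem_erase hb',
        (mem_erase.1 ha).1.symm, hne, ?_, ?_⟩
      · intro h0
        have : x ∈ s(b, b') := h0 ▸ Sym2.mem_mk_left x a
        rcases Sym2.mem_iff.1 this with rfl | rfl
        · exact (mem_erase.1 hb).1 rfl
        · exact (mem_erase.1 hb').1 rfl
      · rw [hnew a haA, heq, hold _ (mk_mem_sym2_iff.2 ⟨hat.1 hb, hat.1 hb'⟩)]
  · have hKU' := (subset_insert_iff_of_notMem hxK).1 hKU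
    exact (h.hasRepeat K hKU' hK).congr hKU' hold

/-- If few vertices are reached by `x`, colours can be lent so as to handle all attached
cliques. -/
theorem Colours.exists_lends (hk : 5 ≤ k) {c : Sym2 V → Sym2 V} {B : Finset (Sym2 V)}
    (h : Colours G k c U B) (hle : #(reach G k U x) ≤ k) (hge : IsAttached G k U x I)
    (hB : #B ≤ 5) (hB' : #(reach G k U x) = k → #B ≤ 2) :
    ∃ A g, Lends c U A g ∧ (#A ≤ 1 ∨ #(reach G k U x) = k ∧ (#A ≤ 2 ∨ #A ≤ 4 ∧ 1 ≤ #B)) ∧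
      ∀ I, IsAttached G k U x I → Handles c A g I := by
  have hIr := card_le_card hge.subset_reach
  rw [hge.2.1.card_eq] at hIr
  by_cases hr : #(reach G k U x) = k
  · have hone : ∀ J, IsAttached G k U x J → ∃ v ∈ reach G k U x, J = (reach G k U x).erase v := by
      intro J hJ
      have h1 : #(reach G k U x \ J) = 1 := by
        rw [card_sdiff_of_subset hJ.subset_reach, hr, hJ.2.1.card_eq]
        omega
      obtain ⟨v, hv⟩ := card_eq_one.1 h1
      have hvr : v ∈ reach G k U x \ J := hv ▸ mem_singleton_self v
      refine ⟨v, (mem_sdiff.1 hvr).1, ?_⟩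
      rw [erase_eq, ← hv, Finset.sdiff_sdiff_eq_self hJ.subset_reach]
    by_cases hcl : G.IsClique (reach G k U x : Set V)
    · obtain ⟨A, g, h1, h2, h3⟩ := h.exists_lends_clique reach_subset (by omega)
        (h.hasRepeat _ reach_subset ⟨hcl, hr⟩) (hB' hr)
      refine ⟨A, g, h1, Or.inr ⟨hr, h2⟩, fun J hJ => ?_⟩
      obtain ⟨v, hv, rfl⟩ := hone J hJ
      exact h3 v hv
    · obtain ⟨u, hu, v, hv, huv, hadj⟩ : ∃ u ∈ reach G k U x, ∃ v ∈ reach G k U x,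
          u ≠ v ∧ ¬ G.Adj u v := by
        simp only [SimpleGraph.IsClique, Set.Pairwise] at hcl
        push Not at hcl
        exact hcl
      obtain ⟨A, g, h1, h2, h3, h4⟩ := h.exists_lends_two (I := (reach G k U x).erase u)
        (J := (reach G k U x).erase v) ((erase_subset _ _).trans reach_subset)
        ((erase_subset _ _).trans reach_subset) (by rw [card_erase_of_mem hu]; omega)
        (by rw [card_erase_of_mem hv]; omega) (hB' hr)
      refine ⟨A, g, h1, Or.inr ⟨hr, Or.inl h2⟩, fun J hJ => ?_⟩
      obtain ⟨w, hw, rfl⟩ := hone J hJ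
      by_cases hwu : w = u
      · rwa [hwu]
      by_cases hwv : w = v
      · rwa [hwv]
      exact absurd (hJ.2.1.isClique (mem_coe.2 (mem_erase.2 ⟨Ne.symm hwu, hu⟩))
        (mem_coe.2 (mem_erase.2 ⟨Ne.symm hwv, hv⟩)) huv) hadj
  · obtain ⟨A, g, h1, h2, h3⟩ := h.exists_lends_one reach_subset
      (I := reach G k U x) (by omega) subset_rfl hB
    refine ⟨A, g, h1, Or.inl h2, fun J hJ => ?_⟩
    rwa [eq_of_subset_of_card_le hJ.subset_reach (by rw [hJ.2.1.card_eq]; omega)]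

/-- A stage can be extended by a vertex with an attached clique. -/
theorem IsStage.extend_vertex (hk : 5 ≤ k) (hpos : ∀ W : Finset V, W.Nonempty → 0 < slack G k W)
    (h : IsStage G k U) {y : V} (hy : y ∉ U) (hat : IsAttached G k U y I)
    (hmax : ∀ x ∉ U, ∀ J, IsAttached G k U x J → degIn G U x ≤ degIn G U y) :
    IsStage G k (insert y U) := by
  have hdeg := card_reach_le_degIn (G := G) (k := k) (U := U) (x := y)
  have hreach := card_le_card hat.subset_reach
  rw [hat.2.1.card_eq] at hreach
  have hle := h.slack_le
  have hs := slack_insert (G := G) (k := k) hy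
  have hp := hpos _ (insert_nonempty y U)
  refine ⟨?_, by omega, fun x hx => ?_, ?_⟩
  · obtain ⟨s, hs, hs'⟩ := h.exists_clique
    exact ⟨s, hs.trans (subset_insert y U), hs'⟩
  · by_contra! hcon
    have hdx := card_reach_le_degIn (G := G) (k := k) (U := insert y U) (x := x)
    have hsx := slack_insert (G := G) (k := k) hx
    have hpx := hpos _ (insert_nonempty x (insert y U))
    have hdi : degIn G (insert y U) x ≤ degIn G U x + 1 := by
      rw [degIn, filter_insert]
      split_ifs
      · exact card_insert_le _ _
      · exact Nat.le_succ _
    have hsub : reach G k (insert y U) x ⊆ insert y {w ∈ U | G.Adj y w} := by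
      intro w hw
      obtain ⟨J, hJ, hwJ⟩ := mem_reach.1 hw
      have hyJ : y ∈ J := by
        by_contra hyJ
        have := hmax x (fun hxU => hx (mem_insert_of_mem hxU)) J
          ⟨(subset_insert_iff_of_notMem hyJ).1 hJ.1, hJ.2⟩
        omega
      by_cases hwy : w = y
      · simp [hwy]
      · exact mem_insert_of_mem (mem_filter.2
          ⟨mem_of_mem_insert_of_ne (hJ.1 hwJ) hwy, hJ.2.1.isClique hyJ hwJ (Ne.symm hwy)⟩)
    have h1 := (card_le_card hsub).trans (card_insert_le _ _)
    change _ ≤ degIn G U y + 1 at h1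
    omega
  · obtain ⟨c, B, hc, hb⟩ := h.exists_colours
    obtain ⟨hb₁, hb₂, hb₃, hb₄⟩ := hb
    obtain ⟨A, g, hA, hcard, hI⟩ := hc.exists_lends hk (h.card_reach_le y hy) hat
      (hb₄ (by omega)) (fun _ => hb₃ (by omega))
    obtain ⟨c', B', hc', hB'⟩ := hc.lend hy hA hI
    refine ⟨c', B', hc', ?_⟩
    unfold Budget
    omega

/-- A coloured set can be extended by a set `N`, if all new cliques contain `N` and nearly all of
a fixed set `C`. -/
theorem Colours.extend {c : Sym2 V → Sym2 V} {B : Finset (Sym2 V)} (h : Colours G k c U B)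
    {N C : Finset V} (hd : Disjoint U N) (hCU : C ⊆ U) (hN : 2 ≤ #N) (hC : 2 ≤ #C)
    (hNC : 5 ≤ #N + #C)
    (hcl : ∀ K ⊆ U ∪ N, G.IsNClique k K → ¬ K ⊆ U → N ⊆ K ∧ #(C \ K) ≤ 1) :
    ∃ c', Colours G k c' (U ∪ N) B := by
  have hu : ∀ n ∈ N, ∀ v, IsUnique c s(n, v) := fun n hn v =>
    h.isUnique fun hmem => disjoint_right.1 hd hn (mk_mem_sym2_iff.1 hmem).1
  have hmem : ∀ v ∈ U ∪ N, ∀ w ∈ U ∪ N, s(v, w) ∈ (U ∪ N).sym2 := fun v hv w hw =>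
    mk_mem_sym2_iff.2 ⟨hv, hw⟩
  have hNU : ∀ n ∈ N, n ∈ U ∪ N := fun n => mem_union_right _
  have hCN : ∀ a ∈ C, a ∈ U ∪ N := fun a ha => mem_union_left _ (hCU ha)
  have hne : ∀ n ∈ N, ∀ a ∈ C, n ≠ a := by
    rintro n hn a ha rfl
    exact disjoint_right.1 hd hn (hCU ha)
  have pair : ∀ K, #(C \ K) ≤ 1 → ∀ a ∈ C, ∀ b ∈ C, a ≠ b → a ∈ K ∨ b ∈ K := by
    intro K hK a ha b hb hab
    by_contra! hcon
    exact hab (card_le_one.1 hK a (mem_sdiff.2 ⟨ha, hcon.1⟩) b (mem_sdiff.2 ⟨hb, hcon.2⟩))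
  suffices hL : ∃ L : List (Sym2 V × Sym2 V),
      (∀ q ∈ L, (IsUnique c q.1 ∧ IsUnique c q.2) ∧
        (q.1 ∈ (U ∪ N).sym2 ∧ q.2 ∈ (U ∪ N).sym2) ∧ ∀ x ∈ q.1, x ∉ q.2) ∧
      L.Pairwise (fun q r => q.1 ≠ r.1 ∧ q.1 ≠ r.2 ∧ q.2 ≠ r.1 ∧ q.2 ≠ r.2) ∧
      (∀ q ∈ L, q.2 ∉ U.sym2) ∧
      ∀ K, N ⊆ K → #(C \ K) ≤ 1 → ∃ q ∈ L, ∃ a ∈ K, ∃ b ∈ K, ∃ a' ∈ K, ∃ b' ∈ K,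
        a ≠ b ∧ a' ≠ b' ∧ q = (s(a, b), s(a', b')) by
    obtain ⟨L, hL₁, hL₂, hL₃, hL₄⟩ := hL
    obtain ⟨c', h', heq, hold⟩ := (h.toIsColouring.mono subset_union_left).merge_list L hL₁ hL₂
    have hold' : ∀ e ∈ U.sym2, c' e = c e := fun e he => hold e (by
      rintro q hq rfl
      exact hL₃ q hq he)
    refine ⟨c', h', fun K hKU hK => ?_⟩
    by_cases hsub : K ⊆ U
    · exact (h.hasRepeat K hsub hK).congr hsub hold'
    · obtain ⟨hNK, hCK⟩ := hcl K hKU hK hsub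
      obtain ⟨q, hq, a, ha, b, hb, a', ha', b', hb', hab, hab', rfl⟩ := hL₄ K hNK hCK
      refine ⟨a, ha, b, hb, a', ha', b', hb', hab, hab', fun hee => ?_, (heq _ hq).symm⟩
      exact (hL₁ _ hq).2.2 a (by simp) (hee ▸ Sym2.mem_mk_left a b)
  have hout : ∀ n ∈ N, ∀ v, s(n, v) ∉ U.sym2 := fun n hn v hmem =>
    disjoint_right.1 hd hn (mk_mem_sym2_iff.1 hmem).1
  by_cases hN3 : 3 ≤ #N
  · obtain ⟨x, hx, y, hy, z, hz, hxy, hxz, hyz⟩ := two_lt_card.1 hN3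
    obtain ⟨a, ha, b, hb, hab⟩ := one_lt_card.1 hC
    have xa := hne x hx a ha
    have xb := hne x hx b hb
    have ya := hne y hy a ha
    have yb := hne y hy b hb
    have za := hne z hz a ha
    have zb := hne z hz b hb
    refine ⟨[(s(x, y), s(z, a)), (s(y, z), s(x, b))], ?_, ?_, ?_, ?_⟩
    · simp only [List.forall_mem_cons]
      refine ⟨⟨⟨hu x hx y, hu z hz a⟩, ⟨hmem x (hNU x hx) y (hNU y hy),
        hmem z (hNU z hz) a (hCN a ha)⟩, ?_⟩, ⟨⟨hu y hy z, hu x hx b⟩,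
        ⟨hmem y (hNU y hy) z (hNU z hz), hmem x (hNU x hx) b (hCN b hb)⟩, ?_⟩, by simp⟩
      · simp [hxz, xa, hyz, ya]
      · simp [hxy.symm, yb, hxz.symm, zb]
    · simp [hxy, hxz, hyz, hxy.symm, yb, xb, xa.symm, ya.symm, hxz.symm, hyz.symm]
    · simp only [List.forall_mem_cons]
      exact ⟨hout z hz a, hout x hx b, by simp⟩
    · intro K hNK hCK
      rcases pair K hCK a ha b hb hab with hK | hK
      · exact ⟨_, by simp, x, hNK hx, y, hNK hy, z, hNK hz, a, hK, hxy, za, rfl⟩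
      · exact ⟨_, List.mem_cons_of_mem _ List.mem_cons_self, y, hNK hy, z, hNK hz, x, hNK hx, b,
          hK, hyz, xb, rfl⟩
  · obtain ⟨x, hx, y, hy, hxy⟩ := one_lt_card.1 hN
    obtain ⟨a, ha, b, hb, d, hd', hab, had, hbd⟩ := two_lt_card.1 (show 2 < #C by omega)
    have xa := hne x hx a ha
    have xb := hne x hx b hb
    have xd := hne x hx d hd'
    have ya := hne y hy a ha
    have yb := hne y hy b hb
    have yd := hne y hy d hd'
    refine ⟨[(s(x, a), s(y, b)), (s(x, b), s(y, d)), (s(x, d), s(y, a))], ?_, ?_, ?_, ?_⟩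
    · simp only [List.forall_mem_cons]
      refine ⟨⟨⟨hu x hx a, hu y hy b⟩, ⟨hmem x (hNU x hx) a (hCN a ha),
        hmem y (hNU y hy) b (hCN b hb)⟩, ?_⟩, ⟨⟨hu x hx b, hu y hy d⟩,
        ⟨hmem x (hNU x hx) b (hCN b hb), hmem y (hNU y hy) d (hCN d hd')⟩, ?_⟩,
        ⟨⟨hu x hx d, hu y hy a⟩, ⟨hmem x (hNU x hx) d (hCN d hd'),
        hmem y (hNU y hy) a (hCN a ha)⟩, ?_⟩, by simp⟩
      · simp [hxy, xb, ya.symm, hab]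
      · simp [hxy, xd, yb.symm, hbd]
      · simp [hxy, xa, yd.symm, had.symm]
    · simp [hxy, hxy.symm, hab, had, hbd, hab.symm, had.symm, xa, xb, xd, ya, yb, yd]
    · simp only [List.forall_mem_cons]
      exact ⟨hout y hy b, hout y hy d, hout y hy a, by simp⟩
    · intro K hNK hCK
      have p₁ := pair K hCK a ha b hb hab
      have p₂ := pair K hCK a ha d hd' had
      have p₃ := pair K hCK b hb d hd' hbd
      by_cases haK : a ∈ K
      · by_cases hbK : b ∈ K
        · exact ⟨_, by simp, x, hNK hx, a, haK, y, hNK hy, b, hbK, xa, yb, rfl⟩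
        · exact ⟨(s(x, d), s(y, a)), by simp, x, hNK hx, d, p₃.resolve_left hbK, y, hNK hy, a, haK,
            xd, ya, rfl⟩
      · exact ⟨(s(x, b), s(y, d)), by simp, x, hNK hx, b, p₁.resolve_left haK, y, hNK hy, d,
          p₂.resolve_left haK, xb, yd, rfl⟩

theorem mul_card_le_adjPairs {N S : Finset V} (hS : S ⊆ U) (h : ∀ n ∈ N, ∀ w ∈ S, G.Adj n w) :
    #N * #S ≤ adjPairs G N U := by
  rw [← smul_eq_mul]
  exact card_nsmul_le_sum _ _ _ fun n hn => card_le_degIn hS (h n hn)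

/-- A stage without attached cliques can be extended by a clique sharing as many vertices with it
as possible. -/
theorem IsStage.extend_clique (hk : 5 ≤ k) (hpos : ∀ W : Finset V, W.Nonempty → 0 < slack G k W)
    (h : IsStage G k U) (hno : ∀ x ∉ U, ∀ I, ¬ IsAttached G k U x I) {K : Finset V}
    (hK : G.IsNClique k K) (hKU : ¬ K ⊆ U) (h2 : 2 ≤ #(K ∩ U))
    (hmax : ∀ K', G.IsNClique k K' → ¬ K' ⊆ U → #(K' ∩ U) ≤ #(K ∩ U)) :
    IsStage G k (U ∪ (K \ U)) := by
  obtain ⟨N, hN⟩ : ∃ N, N = K \ U := ⟨_, rfl⟩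
  rw [← hN]
  have hd : Disjoint U N := hN ▸ disjoint_sdiff
  have hNK : N ⊆ K := hN ▸ sdiff_subset
  have hmi : #N + #(K ∩ U) = k := by
    rw [hN, ← hK.card_eq, card_sdiff_add_card_inter]
  have hNpos : 0 < #N := by
    rw [hN]
    exact card_pos.2 (sdiff_nonempty.2 hKU)
  have hm2 : 2 ≤ #N := by
    by_contra! hlt
    obtain ⟨x, hx⟩ := card_eq_one.1 (show #N = 1 by omega)
    have hxN : x ∈ N := hx ▸ mem_singleton_self x
    refine hno x (disjoint_right.1 hd hxN) _ (isAttached_erase hK (hNK hxN) ?_)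
    intro w hw
    by_cases hwU : w ∈ U
    · exact mem_insert_of_mem hwU
    · have : w ∈ N := hN ▸ mem_sdiff.2 ⟨hw, hwU⟩
      rw [hx, mem_singleton] at this
      simp [this]
  have hNcl : G.IsNClique #N N := ⟨hK.isClique.subset (coe_subset.2 hNK), rfl⟩
  have hadj : ∀ n ∈ N, ∀ w ∈ K ∩ U, G.Adj n w := by
    intro n hn w hw
    refine hK.isClique (hNK hn) (mem_of_mem_inter_left hw) ?_
    rintro rfl
    exact disjoint_right.1 hd hn (mem_of_mem_inter_right hw)
  have hE := mul_card_le_adjPairs inter_subset_right hadj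
  have hs := slack_union (G := G) (k := k) hd
  rw [adjPairs_clique hNcl] at hs
  obtain ⟨m, hm⟩ : ∃ m, m = #N := ⟨_, rfl⟩
  obtain ⟨i, hi⟩ : ∃ i, i = #(K ∩ U) := ⟨_, rfl⟩
  rw [← hm] at hs hE hmi hm2
  rw [← hi] at hE hmi h2 hmax
  have hs' : slack G k (U ∪ N) = slack G k U + m * (i + 2) - 2 * adjPairs G N U := by
    rw [hs, ← hmi]
    obtain ⟨m', rfl⟩ : ∃ m', m = m' + 1 := ⟨m - 1, by omega⟩
    rw [Nat.add_sub_cancel]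
    push_cast
    ring
  have hle := h.slack_le
  have hp := hpos (U ∪ N) ⟨_, mem_union_right U (card_pos.1 hNpos).choose_spec⟩
  have hE' : (m : ℤ) * i ≤ adjPairs G N U := by exact_mod_cast hE
  have hk' : (k : ℤ) = m + i := by exact_mod_cast hmi.symm
  have hmz : (2 : ℤ) ≤ m := by exact_mod_cast hm2
  have hiz : (2 : ℤ) ≤ i := by exact_mod_cast h2
  have hsU : slack G k (U ∪ N) ≤ slack G k U := by nlinarith
  have hunion : ∀ K' ⊆ U ∪ N, #K' ≤ #(K' ∩ U) + #(K' ∩ N) := by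
    intro K' hK'
    refine (card_le_card ?_).trans (card_union_le _ _)
    rw [← inter_union_distrib_left]
    exact subset_inter subset_rfl hK'
  refine ⟨?_, hsU.trans hle, fun x hx => ?_, ?_⟩
  · obtain ⟨s, hs, hs'⟩ := h.exists_clique
    exact ⟨s, hs.trans subset_union_left, hs'⟩
  · by_contra! hcon
    have hxU : x ∉ U := fun hxU => hx (mem_union_left _ hxU)
    have hbig : ∀ I, IsAttached G k (U ∪ N) x I → m - 1 ≤ #(I ∩ N) := by
      intro I hI
      have h1 := hmax _ (hI.isNClique_insert (by omega)) fun h' => hxU (h' (mem_insert_self x I))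
      rw [insert_inter_of_notMem hxU] at h1
      have h3 := hunion I hI.1
      rw [hI.2.1.card_eq] at h3
      omega
    obtain ⟨w, hw, hwK⟩ : ∃ w ∈ reach G k (U ∪ N) x ∩ U, w ∉ K ∩ U := by
      apply exists_mem_notMem_of_card_lt_card
      have h1 := hunion _ (reach_subset (G := G) (k := k) (U := U ∪ N) (x := x))
      have h3 := card_le_card (inter_subset_right (s₁ := reach G k (U ∪ N) x) (s₂ := N))
      omega
    obtain ⟨I, hI, hwI⟩ := mem_reach.1 (mem_of_mem_inter_left hw)
    have hwU := mem_of_mem_inter_right hw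
    have hwdeg : m - 1 ≤ degIn G N w := by
      refine (hbig I hI).trans (card_le_degIn inter_subset_right fun v hv => ?_)
      refine hI.2.1.isClique hwI (mem_of_mem_inter_left hv) ?_
      rintro rfl
      exact disjoint_right.1 hd (mem_of_mem_inter_right hv) hwU
    have hE2 : m * i + (m - 1) ≤ adjPairs G N U := by
      have h1 : ∑ v ∈ insert w (K ∩ U), degIn G N v ≤ adjPairs G U N :=
        sum_le_sum_of_subset (insert_subset hwU inter_subset_right)
      rw [sum_insert hwK, adjPairs_comm U N] at h1
      have h3 := mul_card_le_adjPairs (subset_refl N) (N := K ∩ U) fun v hv n hn =>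
        (hadj n hn v hv).symm
      rw [← hi, ← hm, mul_comm, adjPairs] at h3
      omega
    have hE3 : (m : ℤ) * i + (m - 1) ≤ adjPairs G N U := by
      have : ((m * i + (m - 1) : ℕ) : ℤ) ≤ adjPairs G N U := by exact_mod_cast hE2
      rwa [Nat.cast_add, Nat.cast_sub (by omega), Nat.cast_mul, Nat.cast_one] at this
    have hsx := slack_insert (G := G) (k := k) hx
    have hpx := hpos _ (insert_nonempty x (U ∪ N))
    have hdx := card_reach_le_degIn (G := G) (k := k) (U := U ∪ N) (x := x)
    have hdz : (k : ℤ) + 1 ≤ degIn G (U ∪ N) x := by exact_mod_cast hcon.trans_le hdx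
    have hprod : (m : ℤ) * i < m + i + 1 := by nlinarith
    have hk5 : (5 : ℤ) ≤ m + i := by omega
    nlinarith [mul_nonneg (sub_nonneg.2 hmz) (sub_nonneg.2 hiz)]
  · obtain ⟨c, B, hc, hb⟩ := h.exists_colours
    obtain ⟨C, hC⟩ : ∃ C, C = {w ∈ U | ∀ n ∈ N, G.Adj n w} := ⟨_, rfl⟩
    have hCU : C ⊆ U := hC ▸ filter_subset _ _
    have hiC : i ≤ #C := by
      rw [hi, hC]
      exact card_le_card fun w hw => mem_filter.2 ⟨mem_of_mem_inter_right hw,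
        fun n hn => hadj n hn w hw⟩
    have hCi : #C ≤ i + 1 := by
      by_contra! hlt
      have h1 := mul_card_le_adjPairs hCU (N := N) fun n hn w hw => by
        rw [hC] at hw
        exact (mem_filter.1 hw).2 n hn
      rw [← hm] at h1
      have h3 : (m : ℤ) * (i + 2) ≤ adjPairs G N U := by
        exact_mod_cast (Nat.mul_le_mul_left m hlt).trans h1
      nlinarith
    obtain ⟨c', hc'⟩ := hc.extend hd hCU (by omega) (by omega) (by omega)
      (fun K' hK'U hK' hnot => by
        have h1 := hmax K' hK' hnot
        have h3 := hunion K' hK'U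
        rw [hK'.card_eq] at h3
        have hNK' : N ⊆ K' := by
          rw [← eq_of_subset_of_card_le (inter_subset_right (s₁ := K') (s₂ := N)) (by omega)]
          exact inter_subset_left
        refine ⟨hNK', ?_⟩
        have h4 : K' ∩ U ⊆ C ∩ K' := by
          intro w hw
          refine mem_inter.2 ⟨?_, mem_of_mem_inter_left hw⟩
          rw [hC, mem_filter]
          refine ⟨mem_of_mem_inter_right hw, fun n hn => ?_⟩
          refine hK'.isClique (hNK' hn) (mem_of_mem_inter_left hw) ?_
          rintro rfl
          exact disjoint_right.1 hd hn (mem_of_mem_inter_right hw)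
        have h5 := card_le_card h4
        have h6 := card_le_card (inter_subset_right (s₁ := K') (s₂ := N))
        have h7 := card_sdiff_add_card_inter C K'
        omega)
    refine ⟨c', B, hc', ?_⟩
    obtain ⟨hb₁, hb₂, hb₃, hb₄⟩ := hb
    unfold Budget
    omega

theorem isStage_of_clique (hk : 5 ≤ k) (hU : G.IsNClique k U) : IsStage G k U := by
  have hs := slack_clique hU
  refine ⟨⟨U, subset_rfl, hU⟩, hs.le, fun x _ => ?_, ?_⟩
  · rw [← hU.card_eq]
    exact card_le_card reach_subset
  · obtain ⟨a, ha, b, hb, d, hd, hab, had, hbd⟩ := two_lt_card.1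
      (show 2 < #U by rw [hU.card_eq]; omega)
    obtain ⟨e, he, he'⟩ := exists_mem_notMem_of_card_lt_card (s := ({a, b, d} : Finset V)) (t := U)
      (card_le_three.trans_lt (by rw [hU.card_eq]; omega))
    simp only [mem_insert, mem_singleton, not_or] at he'
    obtain ⟨c, hc, heq, -⟩ := (isColouring_id (U := U) (B := ∅)).merge (e := s(a, b)) (f := s(d, e))
      (fun _ h => h) (fun _ h => h) (mk_mem_sym2_iff.2 ⟨ha, hb⟩) (mk_mem_sym2_iff.2 ⟨hd, he⟩)
      (by simp [had, hbd, Ne.symm he'.1, Ne.symm he'.2.1])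
    refine ⟨c, ∅, ⟨hc, fun K hKU hK => ?_⟩, by simp [Budget]⟩
    rw [eq_of_subset_of_card_le hKU (by rw [hK.card_eq, hU.card_eq])]
    exact ⟨a, ha, b, hb, d, hd, e, he, hab, Ne.symm he'.2.2, by simp [had, Ne.symm he'.1], heq.symm⟩

/-- A stage missing some vertex can be extended. -/
theorem IsStage.exists_ssubset [Fintype V] (hk : 5 ≤ k)
    (hpos : ∀ W : Finset V, W.Nonempty → 0 < slack G k W)
    (hvtx : ∀ x : V, ∃ s : Finset V, G.IsNClique k s ∧ x ∈ s)
    (hcomp : ∀ s t : Finset V, G.IsNClique k s → G.IsNClique k t →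
      Relation.ReflTransGen
        (fun a b : Finset V => G.IsNClique k a ∧ G.IsNClique k b ∧ 2 ≤ #(a ∩ b)) s t)
    (h : IsStage G k U) (hU : U ≠ univ) : ∃ U', U ⊂ U' ∧ IsStage G k U' := by
  classical
  by_cases hno : ∀ x ∉ U, ∀ I, ¬ IsAttached G k U x I
  · obtain ⟨v, hv⟩ : ∃ v, v ∉ U := by
      by_contra! hcon
      exact hU (eq_univ_iff_forall.2 hcon)
    obtain ⟨s, hsU, hs⟩ := h.exists_clique
    obtain ⟨t, ht, hvt⟩ := hvtx v
    have hex : ∃ K, G.IsNClique k K ∧ ¬ K ⊆ U ∧ 2 ≤ #(K ∩ U) := by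
      by_contra! hcon
      have : t ⊆ U := by
        have hst := hcomp s t hs ht
        clear hvt ht
        induction hst with
        | refl => exact hsU
        | @tail b d _ hbd ih =>
          by_contra hdU
          have h1 := hcon d hbd.2.1 hdU
          have h3 := card_le_card (inter_subset_inter_right (u := d) ih)
          rw [inter_comm U d] at h3
          omega
      exact hv (this hvt)
    obtain ⟨K₀, hK₀⟩ := hex
    obtain ⟨K, hK, hmax⟩ := exists_max_image
      (univ.filter fun K : Finset V => G.IsNClique k K ∧ ¬ K ⊆ U ∧ 2 ≤ #(K ∩ U))
      (fun K => #(K ∩ U)) ⟨K₀, by simpa using hK₀⟩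
    simp only [mem_filter, mem_univ, true_and] at hK hmax
    obtain ⟨hKc, hKU, hK2⟩ := hK
    refine ⟨_, ?_, h.extend_clique hk hpos hno hKc hKU hK2 fun K' hK' hK'U => ?_⟩
    · obtain ⟨w, hw, hwU⟩ := not_subset.1 hKU
      exact (ssubset_iff_of_subset subset_union_left).2
        ⟨w, mem_union_right _ (mem_sdiff.2 ⟨hw, hwU⟩), hwU⟩
    · by_cases h' : 2 ≤ #(K' ∩ U)
      · exact hmax K' ⟨hK', hK'U, h'⟩
      · omega
  · push Not at hno
    obtain ⟨y₀, hy₀, I₀, hI₀⟩ := hno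
    obtain ⟨y, hy, hmax⟩ := exists_max_image
      (univ.filter fun y => y ∉ U ∧ ∃ I, IsAttached G k U y I) (degIn G U)
      ⟨y₀, by simpa using ⟨hy₀, I₀, hI₀⟩⟩
    simp only [mem_filter, mem_univ, true_and] at hy hmax
    obtain ⟨hyU, I, hI⟩ := hy
    exact ⟨_, ssubset_insert hyU, h.extend_vertex hk hpos hyU hI fun x hx J hJ =>
      hmax x ⟨hx, J, hJ⟩⟩

end Step

end RainbowClique

/-- For every `k ≥ 5`, every connected graph `G` on at least `k` vertices with
maximum density `m(G) < (k+1)/2`, all of whose vertices and edges lie in a single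
`K_k`-component, admits a proper edge-colouring in which no `k`-clique is
rainbow. -/
theorem exists_proper_colouring_no_rainbow {V : Type*} [Fintype V] [DecidableEq V]
    (k : ℕ) (hk : 5 ≤ k) (G : SimpleGraph V)
    (hconn : G.Connected)
    (hcard : k ≤ Fintype.card V)
    (hm : ∀ J : G.Subgraph, J.verts.Nonempty →
      (J.edgeSet.ncard : ℝ) / (J.verts.ncard : ℝ) < ((k : ℝ) + 1) / 2)
    (hvtx : ∀ x : V, ∃ s : Finset V, G.IsNClique k s ∧ x ∈ s)
    (hedge : ∀ x y : V, G.Adj x y → ∃ s : Finset V, G.IsNClique k s ∧ x ∈ s ∧ y ∈ s)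
    (hcomp : ∀ s t : Finset V, G.IsNClique k s → G.IsNClique k t →
      Relation.ReflTransGen
        (fun a b : Finset V => G.IsNClique k a ∧ G.IsNClique k b ∧ 2 ≤ (a ∩ b).card) s t) :
    ∃ c : Sym2 V → ℕ,
      (∀ e₁ ∈ G.edgeSet, ∀ e₂ ∈ G.edgeSet, e₁ ≠ e₂ →
        (∃ x, x ∈ e₁ ∧ x ∈ e₂) → c e₁ ≠ c e₂) ∧
      (∀ s : Finset V, G.IsNClique k s →
        ∃ e₁ ∈ G.edgeSet, ∃ e₂ ∈ G.edgeSet,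
          (∀ x ∈ e₁, x ∈ s) ∧ (∀ x ∈ e₂, x ∈ s) ∧ e₁ ≠ e₂ ∧ c e₁ = c e₂) := by
  classical
  have hpos : ∀ W : Finset V, W.Nonempty → 0 < RainbowClique.slack G k W := fun W hW =>
    RainbowClique.slack_pos hm hW
  obtain ⟨x⟩ : Nonempty V := Fintype.card_pos_iff.1 (by omega)
  obtain ⟨s, hs, -⟩ := hvtx x
  have grow : ∀ U, RainbowClique.IsStage G k U →
      RainbowClique.IsStage G k (Finset.univ : Finset V) := by
    intro U
    induction U using WellFoundedGT.induction with
    | ind U ih =>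
      intro hU
      by_cases huniv : U = Finset.univ
      · rwa [← huniv]
      · obtain ⟨U', hlt, hU'⟩ := hU.exists_ssubset hk hpos hvtx hcomp huniv
        exact ih U' hlt hU'
  obtain ⟨c, B, hc, -⟩ := (grow s (RainbowClique.isStage_of_clique hk hs)).exists_colours
  let φ := Fintype.equivFin (Sym2 V)
  have hφ : ∀ e f, (φ e : ℕ) = φ f ↔ e = f := fun e f => by
    rw [Fin.val_inj, φ.apply_eq_iff_eq]
  refine ⟨fun e => φ (c e), fun e₁ _ e₂ _ hne ⟨x, hx₁, hx₂⟩ heq => ?_, fun K hK => ?_⟩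
  · exact hc.proper e₁ e₂ hne x hx₁ hx₂ ((hφ _ _).1 heq)
  · obtain ⟨a, ha, b, hb, a', ha', b', hb', hab, hab', hne, heq⟩ :=
      hc.hasRepeat K (Finset.subset_univ K) hK
    refine ⟨s(a, b), hK.isClique ha hb hab, s(a', b'), hK.isClique ha' hb' hab', ?_, ?_, hne,
      (hφ _ _).2 heq⟩
    · simp [ha, hb]
    · simp [ha', hb']
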